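/- Let E_1, …, E_m, F be Banach spaces and q_1, …, q_m ∈ [1, ∞). If every continuous m-linear map from E_1 × ⋯ × E_m into F is absolutely (1; q_1, …, q_m)-summing, then for any n > m and any Banach spaces E_{m+1}, …, E_n, every continuous n-linear map from E_1 × ⋯ × E_n into F is absolutely (1; q_1, …, q_m, 1, …, 1)-summing. -/

import Mathlib

open MeasureTheory

/-- Weak `ℓ_q` norm of a finite family in a normed space. -/
noncomputable def weakLpNorm (𝕜 : Type*) [RCLike 𝕜] {E : Type*} [NormedAddCommGroup E]
    [NormedSpace 𝕜 E] (q : ℝ) {m : ℕ} (x : Fin m → E) : ℝ :=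
  ⨆ φ : {φ : E →L[𝕜] 𝕜 // ‖φ‖ ≤ 1}, (∑ j, ‖φ.1 (x j)‖ ^ q) ^ (1 / q)

/-- `T` satisfies the `p`-semi-integral inequality with constant `C`, witnessed by a regular
Borel probability measure on the product of the closed dual unit balls with their
weak-star topologies. -/
def SemiIntegralWith (𝕜 : Type*) [RCLike 𝕜] {ι : Type*} [Fintype ι] {E : ι → Type*}
    [∀ i, NormedAddCommGroup (E i)] [∀ i, NormedSpace 𝕜 (E i)]
    {F : Type*} [NormedAddCommGroup F]
    (p C : ℝ) (T : (∀ i, E i) → F) : Prop :=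
  letI : MeasurableSpace (∀ i, {φ : WeakDual 𝕜 (E i) // ∀ z, ‖φ z‖ ≤ ‖z‖}) := borel _
  ∃ μ : Measure (∀ i, {φ : WeakDual 𝕜 (E i) // ∀ z, ‖φ z‖ ≤ ‖z‖}),
    IsProbabilityMeasure μ ∧ μ.Regular ∧
      ∀ x : ∀ i, E i,
        ‖T x‖ ≤ C * (∫ φ, ∏ i, ‖(φ i).1 (x i)‖ ^ p ∂μ) ^ (1 / p)

/-- The `si,p` norm: infimum of admissible constants. -/
noncomputable def siNorm (𝕜 : Type*) [RCLike 𝕜] {ι : Type*} [Fintype ι] {E : ι → Type*}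
    [∀ i, NormedAddCommGroup (E i)] [∀ i, NormedSpace 𝕜 (E i)]
    {F : Type*} [NormedAddCommGroup F]
    (p : ℝ) (T : (∀ i, E i) → F) : ℝ :=
  sInf {C : ℝ | 0 ≤ C ∧ SemiIntegralWith 𝕜 p C T}

/-- `T` is absolutely `(p; q₁,…,qₙ)`-summing with constant `C`. -/
def AbsSummingWith (𝕜 : Type*) [RCLike 𝕜] {ι : Type*} [Fintype ι] {E : ι → Type*}
    [∀ i, NormedAddCommGroup (E i)] [∀ i, NormedSpace 𝕜 (E i)]
    {F : Type*} [NormedAddCommGroup F]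
    (p : ℝ) (q : ι → ℝ) (C : ℝ) (T : (∀ i, E i) → F) : Prop :=
  ∀ (m : ℕ) (x : ∀ i, Fin m → E i),
    (∑ j, ‖T (fun i => x i j)‖ ^ p) ^ (1 / p) ≤ C * ∏ i, weakLpNorm 𝕜 (q i) (x i)

/-- `T` is `p`-dominated with constant `C`, witnessed by regular Borel probability measures
on the closed dual unit balls with their weak-star topologies. -/
def DominatedWith (𝕜 : Type*) [RCLike 𝕜] {ι : Type*} [Fintype ι] {E : ι → Type*}
    [∀ i, NormedAddCommGroup (E i)] [∀ i, NormedSpace 𝕜 (E i)]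
    {F : Type*} [NormedAddCommGroup F]
    (p C : ℝ) (T : (∀ i, E i) → F) : Prop :=
  letI : ∀ i, MeasurableSpace {φ : WeakDual 𝕜 (E i) // ∀ z, ‖φ z‖ ≤ ‖z‖} := fun i => borel _
  ∃ μ : ∀ i, Measure {φ : WeakDual 𝕜 (E i) // ∀ z, ‖φ z‖ ≤ ‖z‖},
    (∀ i, IsProbabilityMeasure (μ i)) ∧ (∀ i, (μ i).Regular) ∧
      ∀ x : ∀ i, E i,
        ‖T x‖ ≤ C * ∏ i, (∫ φ, ‖φ.1 (x i)‖ ^ p ∂(μ i)) ^ (1 / p)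

/-- `E` is an `𝓛_∞`-space. -/
def IsLinftySpace (𝕜 : Type*) [RCLike 𝕜] (E : Type*) [NormedAddCommGroup E]
    [NormedSpace 𝕜 E] : Prop :=
  ∃ lam : ℝ, 1 ≤ lam ∧ ∀ M : Submodule 𝕜 E, FiniteDimensional 𝕜 M →
    ∃ N : Submodule 𝕜 E, M ≤ N ∧ FiniteDimensional 𝕜 N ∧
      ∃ v : N ≃L[𝕜] (Fin (Module.finrank 𝕜 N) → 𝕜),
        ‖(v : N →L[𝕜] (Fin (Module.finrank 𝕜 N) → 𝕜))‖ *
          ‖(v.symm : (Fin (Module.finrank 𝕜 N) → 𝕜) →L[𝕜] N)‖ ≤ lam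

/-- `F` has cotype `q`. -/
def HasCotype (q : ℝ) (F : Type*) [NormedAddCommGroup F] : Prop :=
  ∃ C : ℝ, 0 ≤ C ∧ ∀ (m : ℕ) (x : Fin m → F),
    (∑ j, ‖x j‖ ^ q) ^ (1 / q) ≤
      C * ((∑ ε : Fin m → Bool, ‖∑ j, (if ε j then x j else -x j)‖ ^ (2 : ℝ)) / 2 ^ m)
        ^ ((1 : ℝ) / 2)

universe u v

/-!
By the uniform boundedness principle, the summing constants of all continuous `m`-linear maps
`S` into `F` are bounded by `K * ‖S‖` for a single `K`. For signs `ε l i`, each vector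
`z l = ∑ i, ε l i • y l i` has norm at most the weak `ℓ_1` norm of `y l`, so the `m`-linear map
`T(·, z)` is summing with constant at most `K * ‖T‖` times the product of these weak norms,
whatever the signs. Since distinct signs are orthogonal, `T(x j, y j)` is the average over `ε` of
`(∏ l, ε l j) • T(x j, z)`, and Minkowski's inequality transfers the bound from `T(·, z)` to the
original `ℓ_p` sum.
-/

theorem norm_toLp_ofReal {p : ℝ} (hp : 0 < p) {α : Type*} [Fintype α]
    {F : Type*} [SeminormedAddCommGroup F] (f : α → F) :
    ‖WithLp.toLp (ENNReal.ofReal p) f‖ = (∑ j, ‖f j‖ ^ p) ^ (1 / p) := by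
  have toReal_p := ENNReal.toReal_ofReal hp.le
  rw [PiLp.norm_eq_sum (toReal_p.symm ▸ hp), toReal_p]

section SignAveraging

variable {α : Type*} [Fintype α]

theorem sum_sign_mul_sign [DecidableEq α] (i j : α) :
    ∑ ε : α → ℤˣ, ((ε j * ε i : ℤˣ) : ℤ) = if i = j then (Fintype.card (α → ℤˣ) : ℤ) else 0 := by
  let χ : (α → ℤˣ) →* ℤ :=
    (Units.coeHom ℤ).comp (Pi.evalMonoidHom (fun _ => ℤˣ) j * Pi.evalMonoidHom (fun _ => ℤˣ) i)
  have sum_char : ∑ ε : α → ℤˣ, ((ε j * ε i : ℤˣ) : ℤ) = ∑ ε, χ ε := rfl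
  rw [sum_char]
  split_ifs with hij
  · simp [χ, hij]
  · refine sum_hom_units_eq_zero χ fun hχ => ?_
    simpa [χ, Ne.symm hij] using DFunLike.congr_fun hχ (Pi.mulSingle i (-1))

theorem sum_sign_smul_sum_sign_smul [DecidableEq α] {E : Type*} [AddCommGroup E]
    (y : α → E) (j : α) :
    ∑ ε : α → ℤˣ, ε j • ∑ i, ε i • y i = (Fintype.card (α → ℤˣ) : ℤ) • y j := by
  calc ∑ ε : α → ℤˣ, ε j • ∑ i, ε i • y i
      = ∑ i, (∑ ε : α → ℤˣ, ((ε j * ε i : ℤˣ) : ℤ)) • y i := by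
        simp only [Finset.smul_sum, smul_smul, Units.smul_def, Finset.sum_smul]
        exact Finset.sum_comm
    _ = (Fintype.card (α → ℤˣ) : ℤ) • y j := by
        simp only [sum_sign_mul_sign, ite_smul, zero_smul, Finset.sum_ite_eq', Finset.mem_univ,
          if_true]

variable {κ : Type*} {W : κ → Type*} [∀ l, AddCommGroup (W l)]

theorem card_smul_map_eq_sum_signs [DecidableEq α] [Fintype κ] [DecidableEq κ]
    {F : Type*} [AddCommGroup F] (M : MultilinearMap ℤ W F) (y : ∀ l, α → W l) (j : α) :
    Fintype.card (κ → α → ℤˣ) • M (fun l => y l j) =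
      ∑ ε : κ → α → ℤˣ, (∏ l, ε l j) • M (fun l => ∑ i, ε l i • y l i) := by
  calc Fintype.card (κ → α → ℤˣ) • M (fun l => y l j)
      = M (fun l => (Fintype.card (α → ℤˣ) : ℤ) • y l j) := by
        rw [M.map_smul_univ, Finset.prod_const, Finset.card_univ, Fintype.card_fun (α := κ),
          ← natCast_zsmul, Nat.cast_pow]
    _ = M (fun l => ∑ ε : α → ℤˣ, ε j • ∑ i, ε i • y l i) := by
        simp only [sum_sign_smul_sum_sign_smul]
    _ = ∑ ε : κ → α → ℤˣ, M (fun l => ε l j • ∑ i, ε l i • y l i) := M.map_sum _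
    _ = ∑ ε : κ → α → ℤˣ, (∏ l, ε l j) • M (fun l => ∑ i, ε l i • y l i) := by
        simp only [Units.smul_def, M.map_smul_univ, Units.coe_prod]

theorem lp_norm_map_le_of_forall_signs [Finite κ] {F : Type*} [NormedAddCommGroup F]
    [NormedSpace ℝ F] {p : ℝ} (hp : 1 ≤ p) (M : α → MultilinearMap ℤ W F) (y : ∀ l, α → W l) {B : ℝ}
    (hB : ∀ ε : κ → α → ℤˣ,
      (∑ j, ‖M j (fun l => ∑ i, ε l i • y l i)‖ ^ p) ^ (1 / p) ≤ B) :
    (∑ j, ‖M j (fun l => y l j)‖ ^ p) ^ (1 / p) ≤ B := by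
  classical
  have := Fintype.ofFinite κ
  have : Fact (1 ≤ ENNReal.ofReal p) := ⟨ENNReal.one_le_ofReal.2 hp⟩
  have hp0 : 0 < p := one_pos.trans_le hp
  let v : PiLp (ENNReal.ofReal p) (fun _ : α => F) := WithLp.toLp _ fun j => M j (fun l => y l j)
  let w (ε : κ → α → ℤˣ) : PiLp (ENNReal.ofReal p) (fun _ : α => F) :=
    WithLp.toLp _ fun j => (∏ l, ε l j) • M j (fun l => ∑ i, ε l i • y l i)
  have norm_w_le (ε : κ → α → ℤˣ) : ‖w ε‖ ≤ B := by
    simpa only [w, norm_toLp_ofReal hp0, norm_units_zsmul] using hB ε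
  have average : Fintype.card (κ → α → ℤˣ) • v = ∑ ε, w ε := by
    ext j
    simpa [v, w] using card_smul_map_eq_sum_signs (M j) y j
  rw [← norm_toLp_ofReal hp0]
  change ‖v‖ ≤ B
  refine le_of_nsmul_le_nsmul_right (n := Fintype.card (κ → α → ℤˣ)) Fintype.card_ne_zero ?_
  calc Fintype.card (κ → α → ℤˣ) • ‖v‖ = ‖∑ ε, w ε‖ := by rw [← average, RCLike.norm_nsmul ℝ]
    _ ≤ ∑ ε, ‖w ε‖ := norm_sum_le _ _
    _ ≤ Fintype.card (κ → α → ℤˣ) • B :=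
        Finset.sum_le_card_nsmul _ _ _ fun ε _ => norm_w_le ε

end SignAveraging

section WeakLpNorm

variable {𝕜 : Type*} [RCLike 𝕜] {E : Type*} [NormedAddCommGroup E] [NormedSpace 𝕜 E] {N : ℕ}

theorem weakLpNorm_nonneg (q : ℝ) (x : Fin N → E) : 0 ≤ weakLpNorm 𝕜 q x :=
  Real.iSup_nonneg fun _ => by positivity

theorem lp_norm_apply_le_weakLpNorm {q : ℝ} (hq : 0 ≤ q) (x : Fin N → E) {φ : E →L[𝕜] 𝕜}
    (hφ : ‖φ‖ ≤ 1) : (∑ j, ‖φ (x j)‖ ^ q) ^ (1 / q) ≤ weakLpNorm 𝕜 q x := by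
  refine le_ciSup (f := fun ψ : {ψ : E →L[𝕜] 𝕜 // ‖ψ‖ ≤ 1} => (∑ j, ‖ψ.1 (x j)‖ ^ q) ^ (1 / q))
    ⟨(∑ j, ‖x j‖ ^ q) ^ (1 / q), ?_⟩ ⟨φ, hφ⟩
  rintro _ ⟨ψ, rfl⟩
  dsimp only
  gcongr with j
  exact ψ.1.le_of_opNorm_le_of_le ψ.2 le_rfl |>.trans_eq (one_mul _)

theorem norm_sum_sign_smul_le_weakLpNorm_one (ε : Fin N → ℤˣ) (x : Fin N → E) :
    ‖∑ j, ε j • x j‖ ≤ weakLpNorm 𝕜 1 x := by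
  obtain ⟨φ, hφ, φ_norming⟩ := exists_dual_vector'' 𝕜 (∑ j, ε j • x j)
  calc ‖∑ j, ε j • x j‖ = ‖∑ j, ε j • φ (x j)‖ := by
        rw [← RCLike.norm_coe_norm (𝕜 := 𝕜), ← φ_norming]
        simp only [map_sum, Units.smul_def, map_zsmul]
    _ ≤ ∑ j, ‖ε j • φ (x j)‖ := norm_sum_le _ _
    _ = (∑ j, ‖φ (x j)‖ ^ (1 : ℝ)) ^ (1 / (1 : ℝ)) := by
        simp only [norm_units_zsmul, Real.rpow_one, div_one]
    _ ≤ weakLpNorm 𝕜 1 x := lp_norm_apply_le_weakLpNorm zero_le_one x hφ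

end WeakLpNorm

section UniformBoundedness

variable {𝕜 X ι : Type*} {Y : ι → Type*} [SeminormedAddCommGroup X]
  [∀ a, SeminormedAddCommGroup (Y a)]

theorem exists_forall_norm_le_of_pointwise [NontriviallyNormedField 𝕜] [NormedSpace 𝕜 X]
    [BarrelledSpace 𝕜 X] [∀ a, NormedSpace 𝕜 (Y a)] (A : ∀ a, X →L[𝕜] Y a)
    (hA : ∀ x, ∃ C, ∀ a, ‖A a x‖ ≤ C) : ∃ K, 0 ≤ K ∧ ∀ a, ‖A a‖ ≤ K := by
  let s (a : ι) : Seminorm 𝕜 X := (normSeminorm 𝕜 (Y a)).comp (A a).toLinearMap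
  have s_bddAbove : BddAbove (Set.range s) :=
    Seminorm.bddAbove_range_iff.2 fun x => (hA x).imp fun _ hC => Set.forall_mem_range.2 hC
  have iSup_continuous : Continuous ⇑(⨆ a, s a) := by
    rw [Seminorm.coe_iSup_eq s_bddAbove]
    exact Seminorm.continuous_iSup s (fun a => (A a).continuous.norm) s_bddAbove
  obtain ⟨K, K_pos, hK⟩ := (⨆ a, s a).bound_of_continuous_normedSpace iSup_continuous
  exact ⟨K, K_pos.le, fun a => (A a).opNorm_le_bound K_pos.le fun x =>
    (le_ciSup s_bddAbove a x).trans (hK x)⟩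

theorem exists_forall_norm_le_mul_of_pointwise [RCLike 𝕜] [NormedSpace 𝕜 X]
    [BarrelledSpace 𝕜 X] [∀ a, NormedSpace 𝕜 (Y a)] (A : ∀ a, X →L[𝕜] Y a)
    {w : ι → ℝ} (hw : ∀ a, 0 ≤ w a) (hA : ∀ x, ∃ C, ∀ a, ‖A a x‖ ≤ C * w a) :
    ∃ K, 0 ≤ K ∧ ∀ a, ‖A a‖ ≤ K * w a := by
  have norm_inv_weight (a : ι) : ‖((w a)⁻¹ : 𝕜)‖ = (w a)⁻¹ := by
    rw [norm_inv, RCLike.norm_of_nonneg (hw a)]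
  obtain ⟨K, K_nonneg, hK⟩ :=
    exists_forall_norm_le_of_pointwise (fun a => ((w a)⁻¹ : 𝕜) • A a) fun x => by
      obtain ⟨C, hC⟩ := hA x
      refine ⟨|C|, fun a => ?_⟩
      rw [smul_apply, norm_smul, norm_inv_weight, mul_comm, ← div_eq_mul_inv]
      refine div_le_of_le_mul₀ (hw a) (abs_nonneg C) ((hC a).trans ?_)
      exact mul_le_mul_of_nonneg_right (le_abs_self C) (hw a)
  refine ⟨K, K_nonneg, fun a => ?_⟩
  rcases (hw a).eq_or_lt with w_eq_zero | w_pos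
  · refine (A a).opNorm_le_bound (mul_nonneg K_nonneg (hw a)) fun x => ?_
    obtain ⟨C, hC⟩ := hA x
    simpa only [← w_eq_zero, mul_zero, zero_mul] using hC a
  · have := hK a
    rwa [norm_smul, norm_inv_weight, inv_mul_le_iff₀ w_pos, mul_comm] at this

end UniformBoundedness

section MultilinearMaps

variable {𝕜 : Type*} [RCLike 𝕜] {ι κ : Type*} [Fintype ι] [Fintype κ]
  {E : ι → Type*} [∀ i, NormedAddCommGroup (E i)] [∀ i, NormedSpace 𝕜 (E i)]
  {W : κ → Type*} [∀ l, NormedAddCommGroup (W l)] [∀ l, NormedSpace 𝕜 (W l)]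
  {F : Type*} [NormedAddCommGroup F] [NormedSpace 𝕜 F]

theorem exists_forall_absSummingWith_mul_norm [CompleteSpace F] {p : ℝ} (hp : 1 ≤ p) {q : ι → ℝ}
    (H : ∀ T : ContinuousMultilinearMap 𝕜 E F, ∃ C, AbsSummingWith 𝕜 p q C T) :
    ∃ K, 0 ≤ K ∧ ∀ T : ContinuousMultilinearMap 𝕜 E F, AbsSummingWith 𝕜 p q (K * ‖T‖) T := by
  have : Fact (1 ≤ ENNReal.ofReal p) := ⟨ENNReal.one_le_ofReal.2 hp⟩
  let evalLp (a : Σ N : ℕ, ∀ i, Fin N → E i) :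
      ContinuousMultilinearMap 𝕜 E F →L[𝕜] PiLp (ENNReal.ofReal p) (fun _ : Fin a.1 => F) :=
    (PiLp.continuousLinearEquiv _ 𝕜 _).symm.toContinuousLinearMap ∘L
      ContinuousLinearMap.pi fun j => ContinuousMultilinearMap.apply 𝕜 E F fun i => a.2 i j
  have norm_evalLp (T : ContinuousMultilinearMap 𝕜 E F) (a : Σ N : ℕ, ∀ i, Fin N → E i) :
      ‖evalLp a T‖ = (∑ j, ‖T fun i => a.2 i j‖ ^ p) ^ (1 / p) :=
    norm_toLp_ofReal (one_pos.trans_le hp) _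
  obtain ⟨K, K_nonneg, hK⟩ := exists_forall_norm_le_mul_of_pointwise evalLp
    (w := fun a => ∏ i, weakLpNorm 𝕜 (q i) (a.2 i))
    (fun a => Finset.prod_nonneg fun i _ => weakLpNorm_nonneg _ _)
    (fun T => (H T).imp fun C hC a => (norm_evalLp T a).trans_le (hC a.1 a.2))
  refine ⟨K, K_nonneg, fun T N x => ?_⟩
  rw [← norm_evalLp T ⟨N, x⟩, mul_right_comm]
  exact (evalLp ⟨N, x⟩).le_of_opNorm_le (hK ⟨N, x⟩) T

theorem lp_norm_apply_apply_le_mul_prod_weakLpNorm {p : ℝ} (hp : 1 ≤ p) {q : ι → ℝ}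
    {K : ℝ} (hK : 0 ≤ K)
    (H : ∀ T : ContinuousMultilinearMap 𝕜 E F, AbsSummingWith 𝕜 p q (K * ‖T‖) T)
    (S : ContinuousMultilinearMap 𝕜 E (ContinuousMultilinearMap 𝕜 W F)) {N : ℕ}
    (x : ∀ i, Fin N → E i) (y : ∀ l, Fin N → W l) :
    (∑ j, ‖S (fun i => x i j) (fun l => y l j)‖ ^ p) ^ (1 / p) ≤
      K * ‖S‖ * ((∏ i, weakLpNorm 𝕜 (q i) (x i)) * ∏ l, weakLpNorm 𝕜 1 (y l)) := by
  classical
  let _ : NormedSpace ℝ F := .restrictScalars ℝ 𝕜 F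
  refine lp_norm_map_le_of_forall_signs hp
    (fun j => (S fun i => x i j).toMultilinearMap.restrictScalars ℤ) y fun ε => ?_
  let z (l : κ) : W l := ∑ i, ε l i • y l i
  let Sz : ContinuousMultilinearMap 𝕜 E F :=
    (ContinuousMultilinearMap.apply 𝕜 W F z).compContinuousMultilinearMap S
  have norm_Sz_le : ‖Sz‖ ≤ ‖S‖ * ∏ l, weakLpNorm 𝕜 1 (y l) := by
    have prod_nonneg := Finset.prod_nonneg fun l (_ : l ∈ Finset.univ) =>
      weakLpNorm_nonneg (𝕜 := 𝕜) 1 (y l)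
    refine Sz.opNorm_le_bound (by positivity) fun u => ?_
    calc ‖S u z‖ ≤ ‖S u‖ * ∏ l, ‖z l‖ := (S u).le_opNorm z
      _ ≤ (‖S‖ * ∏ i, ‖u i‖) * ∏ l, weakLpNorm 𝕜 1 (y l) := by
          gcongr with l
          · exact S.le_opNorm u
          · exact norm_sum_sign_smul_le_weakLpNorm_one (ε l) (y l)
      _ = ‖S‖ * (∏ l, weakLpNorm 𝕜 1 (y l)) * ∏ i, ‖u i‖ := mul_right_comm _ _ _
  calc (∑ j, ‖Sz fun i => x i j‖ ^ p) ^ (1 / p)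
      ≤ K * ‖Sz‖ * ∏ i, weakLpNorm 𝕜 (q i) (x i) := H Sz N x
    _ ≤ K * (‖S‖ * ∏ l, weakLpNorm 𝕜 1 (y l)) * ∏ i, weakLpNorm 𝕜 (q i) (x i) := by
        have := Finset.prod_nonneg fun i (_ : i ∈ Finset.univ) =>
          weakLpNorm_nonneg (𝕜 := 𝕜) (q i) (x i)
        gcongr
    _ = K * ‖S‖ * ((∏ i, weakLpNorm 𝕜 (q i) (x i)) * ∏ l, weakLpNorm 𝕜 1 (y l)) := by ring

end MultilinearMaps

section Extension

variable {𝕜 : Type*} [RCLike 𝕜] {ι κ : Type*} [Fintype ι] [Fintype κ]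
  {V : ι ⊕ κ → Type*} [∀ i, NormedAddCommGroup (V i)] [∀ i, NormedSpace 𝕜 (V i)]
  {F : Type*} [NormedAddCommGroup F] [NormedSpace 𝕜 F]

/-- The continuous multilinear map in the variables indexed by `ι` obtained by currying the
variables indexed by `κ`. Mathlib has `ContinuousMultilinearMap.currySum` only for a constant
family of spaces. -/
noncomputable def currySumDep (T : ContinuousMultilinearMap 𝕜 V F) :
    ContinuousMultilinearMap 𝕜 (fun i => V (.inl i))
      (ContinuousMultilinearMap 𝕜 (fun l => V (.inr l)) F) :=
  T.toMultilinearMap.currySum.mkContinuousMultilinear ‖T‖ fun x y =>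
    (T.le_opNorm _).trans_eq (by rw [Fintype.prod_sum_type, mul_assoc])

theorem currySumDep_apply_apply (T : ContinuousMultilinearMap 𝕜 V F) (x : ∀ s, V s) :
    currySumDep T (fun i => x (.inl i)) (fun l => x (.inr l)) = T x := by
  change T _ = T x
  congr 1
  ext (i | l) <;> rfl

theorem absSumming_extend_general [CompleteSpace F] {p : ℝ} (hp : 1 ≤ p) {q : ι → ℝ}
    (H : ∀ T : ContinuousMultilinearMap 𝕜 (fun i => V (.inl i)) F, ∃ C, AbsSummingWith 𝕜 p q C T)
    (T : ContinuousMultilinearMap 𝕜 V F) :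
    ∃ C, 0 ≤ C ∧ AbsSummingWith 𝕜 p (Sum.elim q fun _ => 1) C T := by
  obtain ⟨K, K_nonneg, hK⟩ := exists_forall_absSummingWith_mul_norm hp H
  refine ⟨K * ‖currySumDep T‖, by positivity, fun N x => ?_⟩
  simp only [Fintype.prod_sum_type, ← currySumDep_apply_apply T]
  exact lp_norm_apply_apply_le_mul_prod_weakLpNorm hp K_nonneg hK (currySumDep T) _ _

end Extension

/-- If every continuous `m`-linear map from `E₁ × ⋯ × E_m` into `F` is
absolutely `(1; q₁,…,q_m)`-summing, then for any further Banach spaces `G₁,…,G_k`, every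
continuous `(m+k)`-linear map from `E₁ × ⋯ × E_m × G₁ × ⋯ × G_k` into `F` is absolutely
`(1; q₁,…,q_m,1,…,1)`-summing. -/
theorem absSumming_extend {𝕜 : Type v} [RCLike 𝕜] {m k : ℕ} (hm : 1 ≤ m) (hk : 1 ≤ k)
    {E : Fin m → Type u} [∀ i, NormedAddCommGroup (E i)] [∀ i, NormedSpace 𝕜 (E i)]
    [∀ i, CompleteSpace (E i)]
    {F : Type*} [NormedAddCommGroup F] [NormedSpace 𝕜 F] [CompleteSpace F]
    {q : Fin m → ℝ} (hq : ∀ i, 1 ≤ q i)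
    (H : ∀ T : ContinuousMultilinearMap 𝕜 E F, ∃ C, 0 ≤ C ∧ AbsSummingWith 𝕜 1 q C ⇑T) :
    ∀ (G : Fin k → Type u) [∀ j, NormedAddCommGroup (G j)] [∀ j, NormedSpace 𝕜 (G j)]
      [∀ j, CompleteSpace (G j)],
      letI : ∀ i : Fin m ⊕ Fin k, NormedAddCommGroup (Sum.elim E G i) := fun i =>
        Sum.rec (motive := fun i => NormedAddCommGroup (Sum.elim E G i))
          (fun a => inferInstanceAs (NormedAddCommGroup (E a)))
          (fun b => inferInstanceAs (NormedAddCommGroup (G b))) i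
      letI : ∀ i : Fin m ⊕ Fin k, NormedSpace 𝕜 (Sum.elim E G i) := fun i =>
        Sum.rec (motive := fun i => NormedSpace 𝕜 (Sum.elim E G i))
          (fun a => inferInstanceAs (NormedSpace 𝕜 (E a)))
          (fun b => inferInstanceAs (NormedSpace 𝕜 (G b))) i
      ∀ T : ContinuousMultilinearMap 𝕜 (Sum.elim E G) F,
        ∃ C, 0 ≤ C ∧ AbsSummingWith 𝕜 1 (Sum.elim q (fun _ => 1)) C ⇑T := by
  intro G _ _ _ T
  -- The instances on the family `Sum.elim E G` are the `letI` terms of the statement, which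
  -- unification finds and instance synthesis does not.
  apply -synthAssignedInstances absSumming_extend_general
  · exact le_rfl
  · exact fun T => (H T).imp fun _ hC => hC.2
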